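/- Let n, k be integers with n ≥ 5, k ≥ 2 and n ≥ k, and let Σ ⊂ ℙ²(ℂ) be a finite set such that 5·|Σ| ≤ (n+k−2)(n−1) and such that, for every integer t ≥ 1 and every nonzero homogeneous polynomial C of degree t in ℂ[x_0,x_1,x_2], at most t(n+k−2) points of Σ lie on the plane curve {C = 0}. Then for every point P ∈ Σ there exists a homogeneous polynomial of degree 2n+k−6 in ℂ[x_0,x_1,x_2] that vanishes at every point of Σ \ {P} and does not vanish at P. -/

import Mathlib

open MvPolynomial

noncomputable section

/-- The projective space `ℙ^N(ℂ)`. -/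
abbrev ProjPt (N : ℕ) := Projectivization ℂ (Fin (N + 1) → ℂ)

/-- A (homogeneous) polynomial vanishes at a point of projective space. -/
def VanishesAt {N : ℕ} (F : MvPolynomial (Fin (N + 1)) ℂ) (p : ProjPt N) : Prop :=
  eval p.rep F = 0

/-!
If a finite set of points of the plane does not impose independent conditions on forms of degree
`d`, there is a nonzero relation `∑ c_Q H(Q) = 0`, valid for all forms `H` of degree `d`. Let `N` be
the size of its support. Pairing forms of degrees `a` and `d - a` by `∑ c_Q F(Q) G(Q)` shows that
the Hilbert function `h` of the support satisfies `h(a) + h(d - a) ≤ N`.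

Let `F = 0` be a curve of minimal degree `s` through the support. If `2s ≤ d + 1`, every form `G` of
degree `d + 1 - s` vanishing on the support is a multiple of `F`: otherwise, after removal of the
common factor, a nonzero relation in some degree `e` would be supported on the intersection of two
coprime curves whose degrees have sum at most `e + 1`, and such an intersection imposes independent
conditions in degree `e`. Counting forms in degrees `s - 1` and `d + 1 - s` gives
`s(d + 3 - s) ≤ N`. When `d + 3 = m + b` and `N < mb`, this forces `s < b` and then `N > sm`,
against the hypothesis on curves of degree `s`. If `2s > d + 1`, counting forms in the two middle
degrees gives `(d + 2)(d + 4) ≤ 4N`, which is again incompatible with `N < mb`.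
-/

open Module
open scoped LinearAlgebra.Projectivization

section HomogeneousForms

variable {σ K : Type*} [Field K]

instance finite_homogeneousSubmodule [Finite σ] (d : ℕ) :
    Module.Finite K (homogeneousSubmodule σ K d) :=
  Module.Finite.iff_fg.mpr (homogeneousSubmodule_fg σ K d)

theorem finrank_homogeneousSubmodule [Fintype σ] (d : ℕ) :
    finrank K (homogeneousSubmodule σ K d) = (Fintype.card σ).multichoose d := by
  classical
  have hspan : homogeneousSubmodule σ K d = Submodule.span K
      ↑((Finset.univ.finsuppAntidiag d).image fun s : σ →₀ ℕ ↦ monomial s (1 : K)) := by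
    rw [homogeneousSubmodule_eq_finsupp_supported, AddMonoidAlgebra.supported_eq_span_single]
    congr 1
    ext p
    simp [Finsupp.degree_eq_sum, MvPolynomial.single_eq_monomial]
  have hinj : Function.Injective fun s : σ →₀ ℕ ↦ monomial s (1 : K) := by
    simpa using (basisMonomials σ K).injective
  have hind := (basisMonomials σ K).linearIndependent
  rw [coe_basisMonomials] at hind
  rw [hspan, finrank_span_finset_eq_card, Finset.card_image_of_injective _ hinj,
    Finset.card_finsuppAntidiag_nat_eq_multichoose, Finset.card_univ]
  rw [Finset.coe_image]
  exact hind.linearIndepOn_id.mono (Set.image_subset_range _ _)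

theorem isHomogeneous_of_totalDegree_le_of_le_order {F : MvPolynomial σ K} {d : ℕ}
    (hdeg : F.totalDegree ≤ d) (hord : d ≤ (F : MvPowerSeries σ K).order) :
    F.IsHomogeneous d := by
  intro s hs
  rw [← show s.degree = Finsupp.weight 1 s from DFunLike.congr_fun Finsupp.degree_eq_weight_one s]
  refine le_antisymm ((le_totalDegree (mem_support_iff.mpr hs)).trans hdeg) ?_
  rw [← coeff_coe] at hs
  exact_mod_cast hord.trans (MvPowerSeries.order_le hs)

-- The order and the total degree are both additive on products, and they agree on `F`.
theorem isHomogeneous_totalDegree_of_dvd {F G : MvPolynomial σ K} {d : ℕ} (hF : F.IsHomogeneous d)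
    (hF0 : F ≠ 0) (hdvd : G ∣ F) : G.IsHomogeneous G.totalDegree := by
  have order_le_totalDegree {A : MvPolynomial σ K} (hA : A ≠ 0) :
      (A : MvPowerSeries σ K).order ≤ A.totalDegree := by
    obtain ⟨s, hs⟩ := ne_zero_iff.mp hA
    rw [← coeff_coe] at hs
    refine (MvPowerSeries.order_le hs).trans ?_
    rw [coeff_coe] at hs
    exact_mod_cast le_totalDegree (mem_support_iff.mpr hs)
  obtain ⟨B, rfl⟩ := hdvd
  have hG0 := left_ne_zero_of_mul hF0
  have hB0 := right_ne_zero_of_mul hF0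
  have hord : (d : ℕ∞) ≤ ((G : MvPowerSeries σ K) * (B : MvPowerSeries σ K)).order := by
    rw [← coe_mul]
    refine MvPowerSeries.nat_le_order fun s hs ↦ ?_
    rw [coeff_coe]
    exact hF.coeff_eq_zero hs.ne
  rw [MvPowerSeries.order_mul] at hord
  have htotal : G.totalDegree + B.totalDegree = d := by
    rw [← totalDegree_mul_of_isDomain hG0 hB0, hF.totalDegree hF0]
  refine isHomogeneous_of_totalDegree_le_of_le_order le_rfl ?_
  have hB := order_le_totalDegree hB0
  have : ((G.totalDegree + B.totalDegree : ℕ) : ℕ∞) ≤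
      (G : MvPowerSeries σ K).order + B.totalDegree :=
    htotal ▸ hord.trans (add_le_add_right hB _)
  push_cast at this
  exact (ENat.add_le_add_iff_right (ENat.natCast_ne_top _)).mp this

theorem isHomogeneous_cofactor {F A : MvPolynomial σ K} {p a : ℕ} (hF : F.IsHomogeneous p)
    (hF0 : F ≠ 0) (hFA : (F * A).IsHomogeneous (p + a)) : A.IsHomogeneous a := by
  obtain rfl | hA0 := eq_or_ne A 0
  · exact isHomogeneous_zero _ _ _
  have hA := isHomogeneous_totalDegree_of_dvd hFA (mul_ne_zero hF0 hA0) (dvd_mul_left A F)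
  have hdeg := (hF.mul hA).inj_right hFA (mul_ne_zero hF0 hA0)
  rwa [Nat.add_left_cancel hdeg] at hA

theorem isUnit_of_isHomogeneous_zero {F : MvPolynomial σ K} (hF : F.IsHomogeneous 0)
    (hF0 : F ≠ 0) : IsUnit F := by
  obtain ⟨a, rfl⟩ : ∃ a, F = C a :=
    ⟨_, totalDegree_eq_zero_iff_eq_C.mp ((totalDegree_zero_iff_isHomogeneous σ).mpr hF)⟩
  exact (IsUnit.mk0 a fun ha ↦ hF0 (by rw [ha, C_0])).map C

theorem exists_isHomogeneous_reduced_factors {F G : MvPolynomial σ K} {s r : ℕ}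
    (hF : F.IsHomogeneous s) (hG : G.IsHomogeneous r) (hF0 : F ≠ 0) (hG0 : G ≠ 0) :
    ∃ (D F' G' : MvPolynomial σ K) (t p q : ℕ), D.IsHomogeneous t ∧ F'.IsHomogeneous p ∧
      G'.IsHomogeneous q ∧ IsRelPrime F' G' ∧ D * F' = F ∧ D * G' = G ∧ t + p = s ∧ t + q = r := by
  obtain ⟨F', G', D, hrel, rfl, rfl⟩ := UniqueFactorizationMonoid.exists_reduced_factors F hF0 G
  have hD := isHomogeneous_totalDegree_of_dvd hF hF0 (dvd_mul_right D F')
  have hF' := isHomogeneous_totalDegree_of_dvd hF hF0 (dvd_mul_left F' D)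
  have hG' := isHomogeneous_totalDegree_of_dvd hG hG0 (dvd_mul_left G' D)
  exact ⟨D, F', G', _, _, _, hD, hF', hG', hrel, rfl, rfl, (hD.mul hF').inj_right hF hF0,
    (hD.mul hG').inj_right hG hG0⟩

/-- The space `F · S_a` of multiples of `F` by forms of degree `a`. -/
def formMultiples (F : MvPolynomial σ K) (a : ℕ) : Submodule K (MvPolynomial σ K) :=
  (homogeneousSubmodule σ K a).map (LinearMap.mulLeft K F)

theorem mem_formMultiples {F H : MvPolynomial σ K} {a : ℕ} :
    H ∈ formMultiples F a ↔ ∃ A : MvPolynomial σ K, A.IsHomogeneous a ∧ F * A = H := by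
  simp [formMultiples]

instance finite_formMultiples [Finite σ] (F : MvPolynomial σ K) (a : ℕ) :
    Module.Finite K (formMultiples F a) := by
  unfold formMultiples; infer_instance

theorem formMultiples_le {F : MvPolynomial σ K} {p : ℕ} (hF : F.IsHomogeneous p) (a : ℕ) :
    formMultiples F a ≤ homogeneousSubmodule σ K (p + a) := by
  intro H hH
  obtain ⟨A, hA, rfl⟩ := mem_formMultiples.mp hH
  exact hF.mul hA

theorem finrank_formMultiples {F : MvPolynomial σ K} (hF0 : F ≠ 0) (a : ℕ) :
    finrank K (formMultiples F a) = finrank K (homogeneousSubmodule σ K a) :=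
  (Submodule.equivMapOfInjective _ (mul_right_injective₀ hF0) _).finrank_eq.symm

theorem mem_formMultiples_of_dvd {F H : MvPolynomial σ K} {p a : ℕ} (hF : F.IsHomogeneous p)
    (hF0 : F ≠ 0) (hH : H.IsHomogeneous (p + a)) (hdvd : F ∣ H) : H ∈ formMultiples F a := by
  obtain ⟨A, rfl⟩ := hdvd
  exact mem_formMultiples.mpr ⟨A, isHomogeneous_cofactor hF hF0 hH, rfl⟩

theorem formMultiples_inf_formMultiples {F G : MvPolynomial σ K} {p q : ℕ} (j : ℕ)
    (hF : F.IsHomogeneous p) (hG : G.IsHomogeneous q) (hF0 : F ≠ 0) (hG0 : G ≠ 0)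
    (hFG : IsRelPrime F G) :
    formMultiples F (q + j) ⊓ formMultiples G (p + j) = formMultiples (F * G) j := by
  apply le_antisymm
  · rintro H ⟨hHF, hHG⟩
    obtain ⟨A, hA, rfl⟩ := mem_formMultiples.mp hHF
    obtain ⟨B, -, hBA⟩ := mem_formMultiples.mp hHG
    refine mem_formMultiples_of_dvd (hF.mul hG) (mul_ne_zero hF0 hG0) ?_ ?_
    · rw [add_assoc]
      exact hF.mul hA
    · exact mul_dvd_mul_left F (hFG.symm.dvd_of_dvd_mul_left ⟨B, hBA.symm⟩)
  · intro H hH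
    obtain ⟨A, hA, rfl⟩ := mem_formMultiples.mp hH
    exact ⟨mem_formMultiples.mpr ⟨G * A, hG.mul hA, by ring⟩,
      mem_formMultiples.mpr ⟨F * A, hF.mul hA, by ring⟩⟩

theorem finrank_formMultiples_sup [Finite σ] {F G : MvPolynomial σ K} {p q : ℕ} (j : ℕ)
    (hF : F.IsHomogeneous p) (hG : G.IsHomogeneous q) (hF0 : F ≠ 0) (hG0 : G ≠ 0)
    (hFG : IsRelPrime F G) :
    finrank K ↥(formMultiples F (q + j) ⊔ formMultiples G (p + j)) +
        finrank K (homogeneousSubmodule σ K j) =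
      finrank K (homogeneousSubmodule σ K (q + j)) +
        finrank K (homogeneousSubmodule σ K (p + j)) := by
  rw [← finrank_formMultiples (mul_ne_zero hF0 hG0),
    ← formMultiples_inf_formMultiples j hF hG hF0 hG0 hFG,
    Submodule.finrank_sup_add_finrank_inf_eq, finrank_formMultiples hF0, finrank_formMultiples hG0]

end HomogeneousForms

section IndependentConditions

variable {σ K : Type*} [Field K]

/-- A set `Z` of projective points imposes independent conditions on forms of degree `d` if each
of its points is separated from the others by such a form. -/
def ImposesIndependentConditions (Z : Set (ℙ K (σ → K))) (d : ℕ) : Prop :=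
  ∀ P ∈ Z, ∃ F : MvPolynomial σ K, F.IsHomogeneous d ∧
    (∀ Q ∈ Z, Q ≠ P → eval Q.rep F = 0) ∧ eval P.rep F ≠ 0

theorem exists_isHomogeneous_one_eval_eq [Finite σ] (φ : Dual K (σ → K)) :
    ∃ L : MvPolynomial σ K, L.IsHomogeneous 1 ∧ ∀ v, eval v L = φ v := by
  classical
  cases nonempty_fintype σ
  refine ⟨∑ i, C (φ fun j ↦ if i = j then 1 else 0) * X i,
    IsHomogeneous.sum _ _ _ fun i _ ↦ isHomogeneous_C_mul_X _ i, fun v ↦ ?_⟩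
  simp [φ.pi_apply_eq_sum_univ v, mul_comm]

theorem exists_linearForm_separating [Finite σ] {P Q : ℙ K (σ → K)} (hQP : Q ≠ P) :
    ∃ L : MvPolynomial σ K, L.IsHomogeneous 1 ∧ eval Q.rep L = 0 ∧ eval P.rep L ≠ 0 := by
  have hP : P.rep ∉ Submodule.span K {Q.rep} := by
    rw [Submodule.mem_span_singleton]
    rintro ⟨a, ha⟩
    refine hQP.symm ?_
    rw [← P.mk_rep, ← Q.mk_rep, Projectivization.mk_eq_mk_iff']
    exact ⟨a, ha⟩
  obtain ⟨φ, hφP, hφQ⟩ := Submodule.exists_le_ker_of_notMem hP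
  obtain ⟨L, hL, hLφ⟩ := exists_isHomogeneous_one_eval_eq φ
  refine ⟨L, hL, ?_, by rwa [hLφ]⟩
  rw [hLφ]
  exact hφQ (Submodule.mem_span_singleton_self _)

theorem exists_linearForm_eval_ne_zero [Finite σ] (P : ℙ K (σ → K)) :
    ∃ L : MvPolynomial σ K, L.IsHomogeneous 1 ∧ eval P.rep L ≠ 0 := by
  obtain ⟨φ, hφ⟩ := Projective.exists_dual_ne_zero K P.rep_nonzero
  obtain ⟨L, hL, hLφ⟩ := exists_isHomogeneous_one_eval_eq φ
  exact ⟨L, hL, by rwa [hLφ]⟩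

theorem imposesIndependentConditions_of_card_le [Finite σ] {Z : Finset (ℙ K (σ → K))} {d : ℕ}
    (hd : Z.card ≤ d) : ImposesIndependentConditions (Z : Set (ℙ K (σ → K))) d := by
  classical
  intro P _
  obtain ⟨L₀, hL₀, hL₀P⟩ := exists_linearForm_eval_ne_zero P
  choose! L hL hLQ hLP using fun (Q : ℙ K (σ → K)) ↦
    exists_linearForm_separating (P := P) (Q := Q)
  have hprod : (∏ Q ∈ Z.erase P, L Q).IsHomogeneous (∑ _ ∈ Z.erase P, 1) :=
    IsHomogeneous.prod _ _ _ fun Q hQ ↦ hL Q (Finset.ne_of_mem_erase hQ)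
  have hcard := Z.card_erase_le (a := P)
  refine ⟨L₀ ^ (d - (Z.erase P).card) * ∏ Q ∈ Z.erase P, L Q, ?_, fun Q hQ hQP ↦ ?_, ?_⟩
  · convert (hL₀.pow (d - (Z.erase P).card)).mul hprod using 1
    rw [Finset.sum_const, smul_eq_mul]
    omega
  · rw [map_mul, map_prod, Finset.prod_eq_zero (Finset.mem_erase.mpr ⟨hQP, hQ⟩) (hLQ Q hQP),
      mul_zero]
  · rw [map_mul, map_pow, map_prod]
    exact mul_ne_zero (pow_ne_zero _ hL₀P)
      (Finset.prod_ne_zero_iff.mpr fun _ hQ ↦ hLP _ (Finset.ne_of_mem_erase hQ))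

/-- Evaluation of polynomials at the chosen representatives of the points of `Z`. -/
def evalOn (Z : Finset (ℙ K (σ → K))) : MvPolynomial σ K →ₗ[K] Z → K :=
  LinearMap.funLeft K K (fun P : Z ↦ P.1.rep) ∘ₗ evalₗ K σ

@[simp]
theorem evalOn_apply (Z : Finset (ℙ K (σ → K))) (F : MvPolynomial σ K) (P : Z) :
    evalOn Z F P = eval P.1.rep F := rfl

/-- The Hilbert function of a finite set `Z` of projective points: the number of independent
conditions that `Z` imposes on forms of degree `d`. -/
def hilbertFunction (Z : Finset (ℙ K (σ → K))) (d : ℕ) : ℕ :=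
  finrank K ((homogeneousSubmodule σ K d).map (evalOn Z))

/-- The space of forms of degree `d` that vanish on `Z`. -/
def vanishingForms (Z : Finset (ℙ K (σ → K))) (d : ℕ) : Submodule K (MvPolynomial σ K) :=
  homogeneousSubmodule σ K d ⊓ LinearMap.ker (evalOn Z)

theorem mem_vanishingForms {Z : Finset (ℙ K (σ → K))} {d : ℕ} {F : MvPolynomial σ K} :
    F ∈ vanishingForms Z d ↔ F.IsHomogeneous d ∧ ∀ P ∈ Z, eval P.rep F = 0 := by
  simp [vanishingForms, funext_iff]

theorem vanishingForms_zero_eq_bot {Z : Finset (ℙ K (σ → K))} (hZ : Z.Nonempty) :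
    vanishingForms Z 0 = ⊥ := by
  obtain ⟨P, hP⟩ := hZ
  refine (Submodule.eq_bot_iff _).mpr fun F hF ↦ by_contra fun hF0 ↦ ?_
  rw [mem_vanishingForms] at hF
  exact ((isUnit_of_isHomogeneous_zero hF.1 hF0).map (eval P.rep)).ne_zero (hF.2 P hP)

instance finite_vanishingForms [Finite σ] (Z : Finset (ℙ K (σ → K))) (d : ℕ) :
    Module.Finite K (vanishingForms Z d) :=
  Submodule.finiteDimensional_inf_left _ _

theorem hilbertFunction_add_finrank_vanishingForms [Finite σ] (Z : Finset (ℙ K (σ → K))) (d : ℕ) :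
    hilbertFunction Z d + finrank K (vanishingForms Z d) =
      finrank K (homogeneousSubmodule σ K d) := by
  rw [← ((evalOn Z).domRestrict (homogeneousSubmodule σ K d)).finrank_range_add_finrank_ker,
    LinearMap.range_domRestrict, LinearMap.ker_domRestrict, hilbertFunction, vanishingForms,
    ← Submodule.map_comap_subtype, Submodule.finrank_map_subtype_eq]

theorem hilbertFunction_eq_card {Z : Finset (ℙ K (σ → K))} {d : ℕ}
    (hZ : ImposesIndependentConditions (Z : Set (ℙ K (σ → K))) d) :
    hilbertFunction Z d = Z.card := by
  classical
  suffices (homogeneousSubmodule σ K d).map (evalOn Z) = ⊤ by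
    rw [hilbertFunction, this, finrank_top, finrank_fintype_fun_eq_card, Fintype.card_coe]
  rw [eq_top_iff, ← (Pi.basisFun K Z).span_eq, Submodule.span_le]
  rintro _ ⟨P, rfl⟩
  obtain ⟨F, hF, hFQ, hFP⟩ := hZ P.1 P.2
  refine ⟨C (eval P.1.rep F)⁻¹ * F, hF.C_mul _, funext fun Q ↦ ?_⟩
  obtain rfl | hQP := eq_or_ne Q P
  · simp [hFP]
  · simp [hFQ Q.1 Q.2 (Subtype.coe_ne_coe.mpr hQP), hQP]

theorem formMultiples_le_vanishingForms {Z : Finset (ℙ K (σ → K))} {F : MvPolynomial σ K} {p : ℕ}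
    (hF : F ∈ vanishingForms Z p) (a : ℕ) : formMultiples F a ≤ vanishingForms Z (p + a) := by
  rw [mem_vanishingForms] at hF
  intro H hH
  refine mem_vanishingForms.mpr ⟨formMultiples_le hF.1 a hH, fun P hP ↦ ?_⟩
  obtain ⟨A, -, rfl⟩ := mem_formMultiples.mp hH
  rw [map_mul, hF.2 P hP, zero_mul]

end IndependentConditions

section PlaneCurves

variable {K : Type*} [Field K]

theorem two_mul_finrank_planeForms (d : ℕ) :
    2 * finrank K (homogeneousSubmodule (Fin 3) K d) = (d + 1) * (d + 2) := by
  rw [finrank_homogeneousSubmodule, Fintype.card_fin, Nat.multichoose_eq,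
    show 3 + d - 1 = d + 2 by omega, Nat.choose_symm_add, Nat.choose_two_right,
    Nat.mul_div_cancel' (Nat.even_mul_pred_self _).two_dvd]
  simp only [Nat.add_one_sub_one]
  ring

-- In large degrees `Z` imposes independent conditions, and `F · S ⊔ G · S` has codimension `pq`.
theorem card_le_mul_of_isRelPrime {Z : Finset (ℙ K (Fin 3 → K))} {F G : MvPolynomial (Fin 3) K}
    {p q : ℕ} (hF : F ∈ vanishingForms Z p) (hG : G ∈ vanishingForms Z q) (hF0 : F ≠ 0)
    (hG0 : G ≠ 0) (hFG : IsRelPrime F G) : Z.card ≤ p * q := by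
  set j := Z.card
  have hle : formMultiples F (q + j) ⊔ formMultiples G (p + j) ≤ vanishingForms Z (p + q + j) :=
    sup_le ((formMultiples_le_vanishingForms hF _).trans_eq (by rw [add_assoc]))
      ((formMultiples_le_vanishingForms hG _).trans_eq (by rw [add_left_comm, add_assoc]))
  have hsup := finrank_formMultiples_sup j (mem_vanishingForms.mp hF).1 (mem_vanishingForms.mp hG).1
    hF0 hG0 hFG
  have hmono := Submodule.finrank_mono hle
  have hhilb := hilbertFunction_add_finrank_vanishingForms Z (p + q + j)
  rw [hilbertFunction_eq_card (imposesIndependentConditions_of_card_le (by omega))] at hhilb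
  have hdim := two_mul_finrank_planeForms (K := K)
  nlinarith [hdim j, hdim (q + j), hdim (p + j), hdim (p + q + j)]

theorem finite_setOf_eval_eq_zero_of_isRelPrime {F G : MvPolynomial (Fin 3) K} {p q : ℕ}
    (hF : F.IsHomogeneous p) (hG : G.IsHomogeneous q) (hF0 : F ≠ 0) (hG0 : G ≠ 0)
    (hFG : IsRelPrime F G) :
    {P : ℙ K (Fin 3 → K) | eval P.rep F = 0 ∧ eval P.rep G = 0}.Finite := by
  by_contra hinf
  obtain ⟨Z, hZ, hcard⟩ := Set.Infinite.exists_subset_card_eq hinf (p * q + 1)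
  have := card_le_mul_of_isRelPrime (mem_vanishingForms.mpr ⟨hF, fun P hP ↦ (hZ hP).1⟩)
    (mem_vanishingForms.mpr ⟨hG, fun P hP ↦ (hZ hP).2⟩) hF0 hG0 hFG
  omega

end PlaneCurves

section HyperplaneSections

variable {K : Type*} [Field K] {N : ℕ}

/-- The equation `x₀ - ℓ(x₁, …, x_N)` of the hyperplane `x₀ = ℓ(x₁, …, x_N)`, for a linear form
`ℓ`. -/
def hyperplaneForm (ℓ : MvPolynomial (Fin N) K) : MvPolynomial (Fin (N + 1)) K :=
  X 0 - rename Fin.succ ℓ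

theorem eval_hyperplaneForm (ℓ : MvPolynomial (Fin N) K) (v : Fin (N + 1) → K) :
    eval v (hyperplaneForm ℓ) = v 0 - eval (Fin.tail v) ℓ := by
  rw [hyperplaneForm, map_sub, eval_X, eval_rename]
  rfl

theorem hyperplaneForm_ne_zero (ℓ : MvPolynomial (Fin N) K) : hyperplaneForm ℓ ≠ 0 := by
  intro h
  have := eval_hyperplaneForm ℓ (Fin.cons (eval 0 ℓ + 1) 0)
  simp [h] at this

theorem isHomogeneous_hyperplaneForm {ℓ : MvPolynomial (Fin N) K} (hℓ : ℓ.IsHomogeneous 1) :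
    (hyperplaneForm ℓ).IsHomogeneous 1 :=
  (isHomogeneous_X K 0).sub hℓ.rename_isHomogeneous

theorem exists_hyperplaneForm_eval_ne_zero [Infinite K] {Z : Set (ℙ K (Fin (N + 1) → K))}
    (hZ : Z.Finite) : ∃ ℓ : MvPolynomial (Fin N) K, ℓ.IsHomogeneous 1 ∧
      ∀ P ∈ Z, eval P.rep (hyperplaneForm ℓ) ≠ 0 := by
  have := hZ.to_subtype
  obtain ⟨φ, hφ⟩ := exists_dual_forall_apply_ne_zero (K := K)
    (fun o : Option Z ↦ o.elim (Fin.cons 1 0) fun P ↦ P.1.rep) (by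
      rintro (_ | P)
      · exact fun h ↦ one_ne_zero (congrFun h 0)
      · exact P.1.rep_nonzero)
  let a := φ (Fin.cons 1 0)
  have ha : a ≠ 0 := hφ none
  obtain ⟨ℓ, hℓ, hℓφ⟩ := exists_isHomogeneous_one_eval_eq
    (-a⁻¹ • φ ∘ₗ (Fin.consLinearEquiv K fun _ ↦ K).toLinearMap ∘ₗ LinearMap.inr K K (Fin N → K))
  refine ⟨ℓ, hℓ, fun P hP hzero ↦ hφ (some ⟨P, hP⟩) ?_⟩
  have hsplit : P.rep = P.rep 0 • Fin.cons 1 0 + Fin.cons 0 (Fin.tail P.rep) := by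
    funext i
    refine Fin.cases ?_ (fun i ↦ ?_) i <;> simp [Fin.tail]
  have htail : eval (Fin.tail P.rep) ℓ = -a⁻¹ * φ (Fin.cons 0 (Fin.tail P.rep)) := hℓφ _
  rw [eval_hyperplaneForm, sub_eq_zero] at hzero
  calc φ P.rep
      = P.rep 0 * a + φ (Fin.cons 0 (Fin.tail P.rep)) := by
        conv_lhs => rw [hsplit, map_add, map_smul, smul_eq_mul]
    _ = 0 := by rw [hzero, htail]; field_simp; ring

/-- Restriction of polynomials to the hyperplane `x₀ = ℓ(x₁, …, x_N)`, with coordinates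
`x₁, …, x_N`. -/
def restrictToHyperplane (ℓ : MvPolynomial (Fin N) K) :
    MvPolynomial (Fin (N + 1)) K →ₐ[K] MvPolynomial (Fin N) K :=
  aeval (Fin.cons ℓ X)

theorem isHomogeneous_restrictToHyperplane {ℓ : MvPolynomial (Fin N) K} (hℓ : ℓ.IsHomogeneous 1)
    {F : MvPolynomial (Fin (N + 1)) K} {d : ℕ} (hF : F.IsHomogeneous d) :
    (restrictToHyperplane ℓ F).IsHomogeneous d := by
  rw [← one_mul d]
  refine hF.aeval _ fun i ↦ ?_
  exact Fin.cases hℓ (isHomogeneous_X K) i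

theorem eval_restrictToHyperplane (ℓ : MvPolynomial (Fin N) K) (v : Fin N → K)
    (F : MvPolynomial (Fin (N + 1)) K) :
    eval v (restrictToHyperplane ℓ F) = eval (Fin.cons (eval v ℓ) v) F := by
  rw [restrictToHyperplane, ← coe_aeval_eq_eval, ← coe_aeval_eq_eval, RingHom.coe_coe,
    RingHom.coe_coe, comp_aeval_apply]
  congr 2
  funext i
  refine Fin.cases ?_ (fun i ↦ ?_) i <;> simp

theorem restrictToHyperplane_rename_succ (ℓ A : MvPolynomial (Fin N) K) :
    restrictToHyperplane ℓ (rename Fin.succ A) = A := by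
  rw [restrictToHyperplane, aeval_rename]
  exact aeval_X_left_apply A

theorem hyperplaneForm_dvd_sub_rename_restrictToHyperplane (ℓ : MvPolynomial (Fin N) K)
    (F : MvPolynomial (Fin (N + 1)) K) :
    hyperplaneForm ℓ ∣ F - rename Fin.succ (restrictToHyperplane ℓ F) := by
  rw [← Ideal.mem_span_singleton, ← Ideal.Quotient.mk_eq_mk_iff_sub_mem]
  set I := Ideal.span {hyperplaneForm ℓ}
  suffices Ideal.Quotient.mkₐ K I =
      (Ideal.Quotient.mkₐ K I).comp ((rename Fin.succ).comp (restrictToHyperplane ℓ)) from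
    DFunLike.congr_fun this F
  refine algHom_ext fun i ↦ Fin.cases ?_ (fun i ↦ ?_) i
  · have hmem : X 0 - rename Fin.succ ℓ ∈ I := Ideal.mem_span_singleton_self _
    simpa [restrictToHyperplane, Ideal.Quotient.mk_eq_mk_iff_sub_mem] using hmem
  · simp [restrictToHyperplane]

theorem exists_eq_hyperplaneForm_mul {ℓ : MvPolynomial (Fin N) K} (hℓ : ℓ.IsHomogeneous 1)
    {F : MvPolynomial (Fin (N + 1)) K} {d : ℕ} (hF : F.IsHomogeneous (d + 1))
    (hzero : restrictToHyperplane ℓ F = 0) :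
    ∃ M : MvPolynomial (Fin (N + 1)) K, M.IsHomogeneous d ∧ F = hyperplaneForm ℓ * M := by
  have hdvd := hyperplaneForm_dvd_sub_rename_restrictToHyperplane ℓ F
  rw [hzero, map_zero, sub_zero] at hdvd
  obtain ⟨M, rfl⟩ := hdvd
  rw [add_comm d 1] at hF
  exact ⟨M, isHomogeneous_cofactor (isHomogeneous_hyperplaneForm hℓ) (hyperplaneForm_ne_zero ℓ) hF,
    rfl⟩

end HyperplaneSections

section CompleteIntersections

variable {K : Type*} [Field K]

theorem eval_smul_of_isHomogeneous {σ : Type*} {F : MvPolynomial σ K} {d : ℕ}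
    (hF : F.IsHomogeneous d) (a : K) (v : σ → K) : eval (a • v) F = a ^ d * eval v F := by
  rw [eval_eq, eval_eq, Finset.mul_sum]
  refine Finset.sum_congr rfl fun s hs ↦ ?_
  have hdeg : ∑ i ∈ s.support, s i = d :=
    (DFunLike.congr_fun Finsupp.degree_eq_weight_one s).trans (hF (mem_support_iff.mp hs))
  simp only [Pi.smul_apply, smul_eq_mul, mul_pow, Finset.prod_mul_distrib,
    Finset.prod_pow_eq_pow_sum, hdeg]
  ring

-- By the Nullstellensatz a common divisor divides a power of every variable.
theorem isRelPrime_of_forall_eval_eq_zero [IsAlgClosed K] {σ : Type*} [Finite σ] [Nontrivial σ]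
    {f g : MvPolynomial σ K} (hfg : ∀ v, eval v f = 0 → eval v g = 0 → v = 0) :
    IsRelPrime f g := by
  intro D hDf hDg
  have hpow (i : σ) : ∃ m, D ∣ X i ^ m := by
    have hX : (X i : MvPolynomial σ K) ∈ (Ideal.span {D}).radical := by
      rw [← vanishingIdeal_zeroLocus_eq_radical (K := K), zeroLocus_span, mem_vanishingIdeal_iff]
      intro v hv
      have hDv : eval v D = 0 := hv D rfl
      have hv0 : v = 0 := hfg v (zero_dvd_iff.mp (hDv ▸ map_dvd (eval v) hDf))
        (zero_dvd_iff.mp (hDv ▸ map_dvd (eval v) hDg))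
      simp [hv0]
    exact hX.imp fun m hm ↦ Ideal.mem_span_singleton.mp hm
  obtain ⟨i, k, hik⟩ := exists_pair_ne σ
  obtain ⟨m, hm⟩ := hpow i
  obtain ⟨n, hn⟩ := hpow k
  have hXX : IsRelPrime (X i : MvPolynomial σ K) (X k) :=
    X_prime.irreducible.isRelPrime_iff_not_dvd.mpr (X_dvd_X.not.mpr hik)
  exact hXX.pow hm hn

theorem formMultiples_sup_eq_homogeneousSubmodule {f g : MvPolynomial (Fin 2) K} {p q : ℕ}
    (hf : f.IsHomogeneous p) (hg : g.IsHomogeneous q) (hfg : IsRelPrime f g) (j : ℕ) :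
    formMultiples f (q + j) ⊔ formMultiples g (p + j) =
      homogeneousSubmodule (Fin 2) K (p + q + j) := by
  have hle_f : formMultiples f (q + j) ≤ homogeneousSubmodule (Fin 2) K (p + q + j) :=
    (formMultiples_le hf _).trans_eq (by rw [add_assoc])
  have hle_g : formMultiples g (p + j) ≤ homogeneousSubmodule (Fin 2) K (p + q + j) :=
    (formMultiples_le hg _).trans_eq (by rw [add_left_comm, add_assoc])
  refine le_antisymm (sup_le hle_f hle_g) ?_
  obtain rfl | hf0 := eq_or_ne f 0
  · refine le_sup_of_le_right fun H hH ↦ ?_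
    have hunit := isRelPrime_zero_left.mp hfg
    exact mem_formMultiples_of_dvd hg hunit.ne_zero (by rwa [add_left_comm, ← add_assoc])
      hunit.dvd
  obtain rfl | hg0 := eq_or_ne g 0
  · refine le_sup_of_le_left fun H hH ↦ ?_
    have hunit := isRelPrime_zero_right.mp hfg
    exact mem_formMultiples_of_dvd hf hf0 (by rwa [← add_assoc]) hunit.dvd
  refine (Submodule.eq_of_le_of_finrank_eq (sup_le hle_f hle_g) ?_).ge
  have hcount := finrank_formMultiples_sup j hf hg hf0 hg0 hfg
  simp only [finrank_homogeneousSubmodule, Fintype.card_fin, Nat.multichoose_two] at hcount ⊢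
  omega

theorem isRelPrime_restrictToHyperplane [IsAlgClosed K] {N : ℕ} [Nontrivial (Fin N)]
    {ℓ : MvPolynomial (Fin N) K} {F G : MvPolynomial (Fin (N + 1)) K}
    (hzero : ∀ v, eval v F = 0 → eval v G = 0 → eval v (hyperplaneForm ℓ) = 0 → v = 0) :
    IsRelPrime (restrictToHyperplane ℓ F) (restrictToHyperplane ℓ G) := by
  refine isRelPrime_of_forall_eval_eq_zero fun w hwF hwG ↦ ?_
  rw [eval_restrictToHyperplane] at hwF hwG
  have := hzero _ hwF hwG (by simp [eval_hyperplaneForm])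
  exact funext fun i ↦ congrFun this i.succ

theorem exists_sub_hyperplaneForm_mul_mem_span [IsAlgClosed K] {F G H : MvPolynomial (Fin 3) K}
    {ℓ : MvPolynomial (Fin 2) K} {p q e : ℕ} (hℓ : ℓ.IsHomogeneous 1) (hF : F.IsHomogeneous p)
    (hG : G.IsHomogeneous q) (hH : H.IsHomogeneous (e + 1)) (he : p + q ≤ e + 1)
    (hzero : ∀ v, eval v F = 0 → eval v G = 0 → eval v (hyperplaneForm ℓ) = 0 → v = 0) :
    ∃ M : MvPolynomial (Fin 3) K, M.IsHomogeneous e ∧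
      H - hyperplaneForm ℓ * M ∈ Ideal.span {F, G} := by
  obtain ⟨j, hj⟩ := Nat.exists_eq_add_of_le he
  have hrestrict : restrictToHyperplane ℓ H ∈ homogeneousSubmodule (Fin 2) K (p + q + j) :=
    hj ▸ isHomogeneous_restrictToHyperplane hℓ hH
  rw [← formMultiples_sup_eq_homogeneousSubmodule (isHomogeneous_restrictToHyperplane hℓ hF)
    (isHomogeneous_restrictToHyperplane hℓ hG) (isRelPrime_restrictToHyperplane hzero) j,
    Submodule.mem_sup] at hrestrict
  obtain ⟨_, hFA, _, hGB, hsum⟩ := hrestrict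
  obtain ⟨A, hA, rfl⟩ := mem_formMultiples.mp hFA
  obtain ⟨B, hB, rfl⟩ := mem_formMultiples.mp hGB
  set R := F * rename Fin.succ A + G * rename Fin.succ B with hR
  have hR_hom : R.IsHomogeneous (e + 1) := by
    refine IsHomogeneous.add ?_ ?_
    · convert hF.mul (hA.rename_isHomogeneous (f := Fin.succ)) using 1
      omega
    · convert hG.mul (hB.rename_isHomogeneous (f := Fin.succ)) using 1
      omega
  have hR_restrict : restrictToHyperplane ℓ (H - R) = 0 := by
    simp only [hR, map_sub, map_add, map_mul, restrictToHyperplane_rename_succ, hsum, sub_self]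
  obtain ⟨M, hM, hHR⟩ := exists_eq_hyperplaneForm_mul hℓ (hH.sub hR_hom) hR_restrict
  refine ⟨M, hM, Ideal.mem_span_pair.mpr ⟨rename Fin.succ A, rename Fin.succ B, ?_⟩⟩
  rw [← hHR, hR]
  ring

theorem exists_hyperplaneForm_common_zero_eq_zero [IsAlgClosed K] {F G : MvPolynomial (Fin 3) K}
    {p q : ℕ} (hF : F.IsHomogeneous p) (hG : G.IsHomogeneous q) (hF0 : F ≠ 0) (hG0 : G ≠ 0)
    (hFG : IsRelPrime F G) : ∃ ℓ : MvPolynomial (Fin 2) K, ℓ.IsHomogeneous 1 ∧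
      ∀ v, eval v F = 0 → eval v G = 0 → eval v (hyperplaneForm ℓ) = 0 → v = 0 := by
  obtain ⟨ℓ, hℓ, hℓZ⟩ := exists_hyperplaneForm_eval_ne_zero
    (finite_setOf_eval_eq_zero_of_isRelPrime hF hG hF0 hG0 hFG)
  refine ⟨ℓ, hℓ, fun v hvF hvG hvL ↦ ?_⟩
  by_contra hv
  obtain ⟨a, ha⟩ := Projectivization.exists_smul_eq_mk_rep K v hv
  have hrep {A : MvPolynomial (Fin 3) K} {d : ℕ} (hA : A.IsHomogeneous d) (hvA : eval v A = 0) :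
      eval (Projectivization.mk K v hv).rep A = 0 := by
    rw [← ha, Units.smul_def, eval_smul_of_isHomogeneous hA, hvA, mul_zero]
  exact hℓZ _ ⟨hrep hF hvF, hrep hG hvG⟩ (hrep (isHomogeneous_hyperplaneForm hℓ) hvL)

-- A linear form without zeros on `Z` is invertible on `Z`, and modulo `F` and `G` every form of
-- degree `e + 1` is a multiple of it.
theorem ImposesIndependentConditions.of_succ [IsAlgClosed K] {Z : Finset (ℙ K (Fin 3 → K))}
    {F G : MvPolynomial (Fin 3) K} {ℓ : MvPolynomial (Fin 2) K} {p q e : ℕ}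
    (hZ : ImposesIndependentConditions (Z : Set (ℙ K (Fin 3 → K))) (e + 1))
    (hF : F ∈ vanishingForms Z p) (hG : G ∈ vanishingForms Z q) (hℓ : ℓ.IsHomogeneous 1)
    (hzero : ∀ v, eval v F = 0 → eval v G = 0 → eval v (hyperplaneForm ℓ) = 0 → v = 0)
    (he : p + q ≤ e + 1) : ImposesIndependentConditions (Z : Set (ℙ K (Fin 3 → K))) e := by
  rw [mem_vanishingForms] at hF hG
  intro P hP
  obtain ⟨H, hH, hHQ, hHP⟩ := hZ P hP
  obtain ⟨M, hM, hHM⟩ := exists_sub_hyperplaneForm_mul_mem_span hℓ hF.1 hG.1 hH he hzero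
  have hHM_eval {Q} (hQ : Q ∈ Z) :
      eval Q.rep H = eval Q.rep (hyperplaneForm ℓ) * eval Q.rep M := by
    obtain ⟨A, B, hAB⟩ := Ideal.mem_span_pair.mp hHM
    have := congrArg (eval Q.rep) hAB
    refine sub_eq_zero.mp ?_
    simpa [hF.2 Q hQ, hG.2 Q hQ] using this.symm
  refine ⟨M, hM, fun Q hQ hQP ↦ ?_, right_ne_zero_of_mul (hHM_eval hP ▸ hHP)⟩
  have hprod := (hHM_eval hQ).symm.trans (hHQ Q hQ hQP)
  exact (mul_eq_zero.mp hprod).resolve_left fun hQℓ ↦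
    Q.rep_nonzero (hzero _ (hF.2 Q hQ) (hG.2 Q hQ) hQℓ)

theorem imposesIndependentConditions_of_isRelPrime [IsAlgClosed K] {Z : Finset (ℙ K (Fin 3 → K))}
    {F G : MvPolynomial (Fin 3) K} {p q e : ℕ} (hF : F ∈ vanishingForms Z p)
    (hG : G ∈ vanishingForms Z q) (hF0 : F ≠ 0) (hG0 : G ≠ 0) (hFG : IsRelPrime F G)
    (he : p + q ≤ e + 1) : ImposesIndependentConditions (Z : Set (ℙ K (Fin 3 → K))) e := by
  obtain ⟨ℓ, hℓ, hzero⟩ := exists_hyperplaneForm_common_zero_eq_zero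
    (mem_vanishingForms.mp hF).1 (mem_vanishingForms.mp hG).1 hF0 hG0 hFG
  have hdescend (k : ℕ) (hZ : ImposesIndependentConditions (Z : Set (ℙ K (Fin 3 → K))) (e + k)) :
      ImposesIndependentConditions (Z : Set (ℙ K (Fin 3 → K))) e := by
    induction k with
    | zero => exact hZ
    | succ k ih => exact ih (hZ.of_succ (e := e + k) hF hG hℓ hzero (by omega))
  exact hdescend Z.card (imposesIndependentConditions_of_card_le (Nat.le_add_left _ _))

end CompleteIntersections

section EvaluationRelations

variable {σ K : Type*} [Field K]

/-- A finitely supported family `c` of scalars is an evaluation relation in degree `d` if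
`∑ c_Q H(Q) = 0` for every form `H` of degree `d`, the forms being evaluated at the chosen
representatives. -/
def IsEvaluationRelation (c : ℙ K (σ → K) →₀ K) (d : ℕ) : Prop :=
  ∀ H : MvPolynomial σ K, H.IsHomogeneous d → (c.sum fun Q a ↦ a * eval Q.rep H) = 0

/-- The family `Q ↦ D(Q) c_Q` of scalars. -/
def evalSMul (D : MvPolynomial σ K) (c : ℙ K (σ → K) →₀ K) : ℙ K (σ → K) →₀ K :=
  (fun Q : ℙ K (σ → K) ↦ eval Q.rep D) • c

@[simp]
theorem evalSMul_apply (D : MvPolynomial σ K) (c : ℙ K (σ → K) →₀ K) (Q : ℙ K (σ → K)) :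
    evalSMul D c Q = eval Q.rep D * c Q := rfl

theorem mem_support_evalSMul {D : MvPolynomial σ K} {c : ℙ K (σ → K) →₀ K} {Q : ℙ K (σ → K)} :
    Q ∈ (evalSMul D c).support ↔ eval Q.rep D ≠ 0 ∧ Q ∈ c.support := by
  simp only [Finsupp.mem_support_iff, evalSMul_apply, mul_ne_zero_iff]

theorem evalSMul_eq_zero_iff {D : MvPolynomial σ K} {c : ℙ K (σ → K) →₀ K} :
    evalSMul D c = 0 ↔ ∀ Q ∈ c.support, eval Q.rep D = 0 := by
  simp [Finsupp.ext_iff, or_iff_not_imp_right]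

theorem mem_vanishingForms_support_evalSMul {D F : MvPolynomial σ K} {c : ℙ K (σ → K) →₀ K} {p : ℕ}
    (hF : F.IsHomogeneous p) (hDF : ∀ Q ∈ c.support, eval Q.rep (D * F) = 0) :
    F ∈ vanishingForms (evalSMul D c).support p := by
  refine mem_vanishingForms.mpr ⟨hF, fun Q hQ ↦ ?_⟩
  obtain ⟨hQD, hQc⟩ := mem_support_evalSMul.mp hQ
  exact (mul_eq_zero.mp (map_mul (eval Q.rep) D F ▸ hDF Q hQc)).resolve_left hQD

theorem isEvaluationRelation_evalSMul {c : ℙ K (σ → K) →₀ K} {D : MvPolynomial σ K} {t e : ℕ}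
    (hc : IsEvaluationRelation c (t + e)) (hD : D.IsHomogeneous t) :
    IsEvaluationRelation (evalSMul D c) e := by
  intro H hH
  rw [← hc (D * H) (hD.mul hH), Finsupp.sum_of_support_subset _
    (fun Q hQ ↦ (mem_support_evalSMul.mp hQ).2) _ fun Q _ ↦ zero_mul _]
  refine Finset.sum_congr rfl fun Q _ ↦ ?_
  simp only [evalSMul_apply, map_mul]
  ring

theorem IsEvaluationRelation.eq_zero {c : ℙ K (σ → K) →₀ K} {d : ℕ}
    (hc : IsEvaluationRelation c d)
    (hind : ImposesIndependentConditions (c.support : Set (ℙ K (σ → K))) d) : c = 0 := by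
  by_contra hc0
  obtain ⟨P, hP⟩ := Finsupp.support_nonempty_iff.mpr hc0
  obtain ⟨F, hF, hFQ, hFP⟩ := hind P hP
  have hsum := hc F hF
  rw [Finsupp.sum, Finset.sum_eq_single_of_mem P hP
    fun Q hQ hQP ↦ by rw [hFQ Q hQ hQP, mul_zero]] at hsum
  exact mul_ne_zero (Finsupp.mem_support_iff.mp hP) hFP hsum

theorem exists_isEvaluationRelation {Z : Finset (ℙ K (σ → K))} {d : ℕ}
    (hZ : ¬ ImposesIndependentConditions (Z : Set (ℙ K (σ → K))) d) :
    ∃ c : ℙ K (σ → K) →₀ K, c ≠ 0 ∧ c.support ⊆ Z ∧ IsEvaluationRelation c d := by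
  classical
  let ev (Q : ℙ K (σ → K)) : Dual K (homogeneousSubmodule σ K d) :=
    (aeval Q.rep).toLinearMap ∘ₗ (homogeneousSubmodule σ K d).subtype
  have hdep : ¬ LinearIndepOn K ev (Z : Set (ℙ K (σ → K))) := by
    refine fun hind ↦ hZ fun P hP ↦ ?_
    have hspan := linearIndepOn_iff_notMem_span.mp hind P hP
    rw [Set.image_eq_range] at hspan
    have : Finite ↥((Z : Set (ℙ K (σ → K))) \ {P}) := (Z.finite_toSet.sdiff).to_subtype
    obtain ⟨F, hFQ, hFP⟩ := SetLike.not_le_iff_exists.mp (mt mem_span_of_iInf_ker_le_ker hspan)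
    rw [Submodule.mem_iInf] at hFQ
    exact ⟨F.1, F.2, fun Q hQ hQP ↦ hFQ ⟨Q, hQ, hQP⟩, hFP⟩
  rw [linearIndepOn_iff] at hdep
  push Not at hdep
  obtain ⟨c, hcZ, hc, hc0⟩ := hdep
  refine ⟨c, hc0, by exact_mod_cast hcZ, fun H hH ↦ ?_⟩
  simpa [Finsupp.linearCombination_apply, Finsupp.sum, ev] using DFunLike.congr_fun hc ⟨H, hH⟩

theorem IsEvaluationRelation.hilbertFunction_add_le_card {c : ℙ K (σ → K) →₀ K} {a b : ℕ}
    (hc : IsEvaluationRelation c (a + b)) :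
    hilbertFunction c.support a + hilbertFunction c.support b ≤ c.support.card := by
  classical
  let B : LinearMap.BilinForm K (c.support → K) :=
    Matrix.toBilin' (Matrix.diagonal fun P : c.support ↦ c P)
  have hB_apply (x y) : B x y = ∑ P : c.support, c P * (x P * y P) := by
    simp only [B, Matrix.toBilin'_apply', Matrix.mulVec_diagonal, dotProduct]
    exact Finset.sum_congr rfl fun P _ ↦ mul_left_comm _ _ _
  have hB : B.Nondegenerate := by
    refine (Matrix.nondegenerate_of_det_ne_zero ?_).toBilin'
    rw [Matrix.det_diagonal]
    exact Finset.prod_ne_zero_iff.mpr fun P _ ↦ Finsupp.mem_support_iff.mp P.2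
  have hle : (homogeneousSubmodule σ K b).map (evalOn c.support) ≤
      B.orthogonal ((homogeneousSubmodule σ K a).map (evalOn c.support)) := by
    rintro _ ⟨G, hG, rfl⟩ _ ⟨F, hF, rfl⟩
    change B _ _ = 0
    rw [hB_apply, ← hc (F * G) (hF.mul hG), Finsupp.sum]
    simp only [evalOn_apply, map_mul]
    exact Finset.sum_coe_sort c.support fun Q ↦ c Q * (eval Q.rep F * eval Q.rep G)
  have hmono := Submodule.finrank_mono hle
  rw [LinearMap.BilinForm.finrank_orthogonal hB, finrank_fintype_fun_eq_card,
    Fintype.card_coe] at hmono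
  have hle_top := Submodule.finrank_le ((homogeneousSubmodule σ K a).map (evalOn c.support))
  rw [finrank_fintype_fun_eq_card, Fintype.card_coe] at hle_top
  rw [hilbertFunction, hilbertFunction]
  omega

end EvaluationRelations

section PlaneRelations

variable {K : Type*} [Field K] {c : ℙ K (Fin 3 → K) →₀ K} {d : ℕ}

-- A greatest common divisor `D` of degree `t < s` can be moved into the relation: `evalSMul D c` is
-- a nonzero relation in degree `d - t` supported on the intersection of two coprime curves.
theorem IsEvaluationRelation.dvd_of_mem_vanishingForms [IsAlgClosed K]
    {F G : MvPolynomial (Fin 3) K} {s r : ℕ} (hc : IsEvaluationRelation c d) (hF0 : F ≠ 0)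
    (hF : F ∈ vanishingForms c.support s) (hmin : ∀ t < s, vanishingForms c.support t = ⊥)
    (hG : G ∈ vanishingForms c.support r) (hsr : s + r ≤ d + 1) : F ∣ G := by
  by_contra hFG
  have hG0 : G ≠ 0 := by rintro rfl; exact hFG (dvd_zero F)
  rw [mem_vanishingForms] at hF hG
  obtain ⟨D, F', G', t, p, q, hD, hF', hG', hrel, rfl, rfl, rfl, rfl⟩ :=
    exists_isHomogeneous_reduced_factors hF.1 hG.1 hF0 hG0
  have hF'0 := right_ne_zero_of_mul hF0
  have hp : 0 < p := by
    refine Nat.pos_of_ne_zero ?_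
    rintro rfl
    exact hFG (mul_dvd_mul_left D (isUnit_of_isHomogeneous_zero hF' hF'0).dvd)
  obtain ⟨e, rfl⟩ := Nat.exists_eq_add_of_le (show t ≤ d by omega)
  have hDc : evalSMul D c = 0 := (isEvaluationRelation_evalSMul hc hD).eq_zero <|
    imposesIndependentConditions_of_isRelPrime (mem_vanishingForms_support_evalSMul hF' hF.2)
      (mem_vanishingForms_support_evalSMul hG' hG.2) hF'0 (right_ne_zero_of_mul hG0) hrel (by omega)
  have hD_mem : D ∈ vanishingForms c.support t :=
    mem_vanishingForms.mpr ⟨hD, evalSMul_eq_zero_iff.mp hDc⟩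
  rw [hmin t (by omega)] at hD_mem
  exact left_ne_zero_of_mul hF0 hD_mem

-- Multiples of `F` exhaust the forms of degree `d + 1 - s` that vanish on the support.
theorem IsEvaluationRelation.mul_le_card_support [IsAlgClosed K] {F : MvPolynomial (Fin 3) K}
    {s : ℕ} (hc : IsEvaluationRelation c d) (hF0 : F ≠ 0) (hF : F ∈ vanishingForms c.support s)
    (hmin : ∀ t < s, vanishingForms c.support t = ⊥) (hs : 2 * s ≤ d + 1) :
    s * (d + 3 - s) ≤ c.support.card := by
  obtain _ | r := s
  · rw [zero_mul]; exact Nat.zero_le _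
  obtain ⟨j, hj⟩ := Nat.exists_eq_add_of_le hs
  obtain rfl : d = (r + 1 + j) + r := by omega
  have hle : vanishingForms c.support (r + 1 + j) ≤ formMultiples F j := fun G hG ↦
    mem_formMultiples_of_dvd (mem_vanishingForms.mp hF).1 hF0 (mem_vanishingForms.mp hG).1
      (hc.dvd_of_mem_vanishingForms hF0 hF hmin hG (by omega))
  have hmono := (Submodule.finrank_mono hle).trans_eq (finrank_formMultiples hF0 j)
  have hcard := hc.hilbertFunction_add_le_card
  have hhilb_r := hilbertFunction_add_finrank_vanishingForms c.support r
  have hhilb_j := hilbertFunction_add_finrank_vanishingForms c.support (r + 1 + j)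
  rw [hmin r r.lt_succ_self, finrank_bot] at hhilb_r
  have hdim := two_mul_finrank_planeForms (K := K)
  rw [show r + 1 + j + r + 3 - (r + 1) = r + j + 3 by omega]
  nlinarith [hdim r, hdim j, hdim (r + 1 + j)]

theorem IsEvaluationRelation.mul_le_four_mul_card_support (hc : IsEvaluationRelation c d)
    (hbot : ∀ t, 2 * t ≤ d + 1 → vanishingForms c.support t = ⊥) :
    (d + 2) * (d + 4) ≤ 4 * c.support.card := by
  have hhilb {t : ℕ} (ht : 2 * t ≤ d + 1) :
      2 * hilbertFunction c.support t = (t + 1) * (t + 2) := by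
    have := hilbertFunction_add_finrank_vanishingForms c.support t
    rw [hbot t ht, finrank_bot, add_zero] at this
    rw [this, two_mul_finrank_planeForms]
  obtain ⟨k, rfl | rfl⟩ := d.even_or_odd'
  · have hcard := (two_mul k ▸ hc).hilbertFunction_add_le_card
    nlinarith [hhilb (t := k) (by omega)]
  · have hcard := IsEvaluationRelation.hilbertFunction_add_le_card
      (show IsEvaluationRelation c (k + (k + 1)) by convert hc using 1; omega)
    nlinarith [hhilb (t := k) (by omega), hhilb (t := k + 1) (by omega)]

theorem IsEvaluationRelation.card_support_large_or_exists_vanishingForm [IsAlgClosed K]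
    (hc : IsEvaluationRelation c d) (hc0 : c ≠ 0) :
    (d + 2) * (d + 4) ≤ 4 * c.support.card ∨
      ∃ s, 1 ≤ s ∧ 2 * s ≤ d + 1 ∧ s * (d + 3 - s) ≤ c.support.card ∧
        ∃ F ∈ vanishingForms c.support s, F ≠ 0 := by
  classical
  by_cases hbot : ∀ t, 2 * t ≤ d + 1 → vanishingForms c.support t = ⊥
  · exact Or.inl (hc.mul_le_four_mul_card_support hbot)
  right
  have hex : ∃ s, 2 * s ≤ d + 1 ∧ ∃ F ∈ vanishingForms c.support s, F ≠ 0 := by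
    simpa [Submodule.eq_bot_iff] using hbot
  obtain ⟨hsd, F, hF, hF0⟩ := Nat.find_spec hex
  have hmin (t : ℕ) (ht : t < Nat.find hex) : vanishingForms c.support t = ⊥ := by
    have hnone := Nat.find_min hex ht
    push Not at hnone
    exact (Submodule.eq_bot_iff _).mpr (hnone (by omega))
  refine ⟨Nat.find hex, Nat.pos_of_ne_zero fun hs ↦ hF0 ?_, hsd,
    hc.mul_le_card_support hF0 hF hmin hsd, F, hF, hF0⟩
  rwa [hs, vanishingForms_zero_eq_bot (Finsupp.support_nonempty_iff.mpr hc0)] at hF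

end PlaneRelations

theorem stmt_10_general {K : Type*} [Field K] [IsAlgClosed K] {m b d : ℕ} (hd : m + b ≤ d + 3)
    {S : Set (ℙ K (Fin 3 → K))} (hfin : S.Finite) (hcard : S.ncard < m * b)
    (hcurve : ∀ t, 1 ≤ t → t < b → ∀ C : MvPolynomial (Fin 3) K, C ≠ 0 → C.IsHomogeneous t →
      (S ∩ {P | eval P.rep C = 0}).ncard ≤ t * m) :
    ImposesIndependentConditions S d := by
  by_contra hS
  rw [← hfin.coe_toFinset] at hS
  obtain ⟨c, hc0, hcS, hc⟩ := exists_isEvaluationRelation hS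
  replace hcS : (c.support : Set (ℙ K (Fin 3 → K))) ⊆ S := fun P hP ↦ hfin.mem_toFinset.mp (hcS hP)
  have hlt : c.support.card < m * b :=
    (Set.ncard_coe_finset c.support ▸ Set.ncard_le_ncard hcS hfin).trans_lt hcard
  obtain hlarge | ⟨s, hs, hsd, hlower, F, hF, hF0⟩ :=
    hc.card_support_large_or_exists_vanishingForm hc0
  · nlinarith [four_mul_le_sq_add m b]
  obtain ⟨x, hx⟩ := Nat.exists_eq_add_of_le (show s ≤ d + 3 by omega)
  rw [hx, Nat.add_sub_cancel_left] at hlower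
  obtain hbs | hsb := le_or_gt b s
  · nlinarith
  rw [mem_vanishingForms] at hF
  have hcurve_s : (c.support : Set (ℙ K (Fin 3 → K))) ⊆ S ∩ {P | eval P.rep F = 0} :=
    fun P hP ↦ ⟨hcS hP, hF.2 P hP⟩
  have hupper : c.support.card ≤ s * m :=
    (Set.ncard_coe_finset c.support ▸
      Set.ncard_le_ncard hcurve_s (hfin.inter_of_left _)).trans (hcurve s hs hsb F hF0 hF.1)
  have hxm : x ≤ m := le_of_mul_le_mul_left (hlower.trans hupper) hs
  omega

theorem stmt_10 (n k : ℕ) (hn : 5 ≤ n) (hk : 2 ≤ k) (hkn : k ≤ n)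
    (S : Set (ProjPt 2)) (hfin : S.Finite)
    (hcard : 5 * S.ncard ≤ (n + k - 2) * (n - 1))
    (hcurve : ∀ t : ℕ, 1 ≤ t →
      ∀ C : MvPolynomial (Fin 3) ℂ, C ≠ 0 → C.IsHomogeneous t →
        (S ∩ {p : ProjPt 2 | VanishesAt C p}).ncard ≤ t * (n + k - 2)) :
    ∀ P ∈ S, ∃ F : MvPolynomial (Fin 3) ℂ,
      F.IsHomogeneous (2 * n + k - 6) ∧
      (∀ Q ∈ S, Q ≠ P → VanishesAt F Q) ∧ ¬ VanishesAt F P := by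
  have hpos : 0 < (n + k - 2) * (n - 1) := Nat.mul_pos (by omega) (by omega)
  exact stmt_10_general (m := n + k - 2) (b := n - 1) (by omega) hfin (by omega)
    fun t ht _ ↦ hcurve t ht
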